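/- Let T be a semi-standard set-valued tableau of any skew shape with entries ≤ n and let λ be a partition. Then the row word r(T) is λ-dominant if and only if the column word c(T) is λ-dominant. -/

import Mathlib

/-!
Fix `i ≥ 1`.  In a word, only prefixes ending at a letter `i + 1` can violate dominance.  For both
readings such a letter lies in some cell `x`, and as the entries of a cell are read in decreasing
order the condition reads `#(i+1) + 1 ≤ #i`, where the letters of the initial word and those in
cells read strictly before `x` are counted (`dominant_cells_iff`).  The theorem therefore compares
the two families of inequalities indexed by the cells `x = (r, c)` containing `i + 1`.

Semistandardness (`IsSSVT.row_le`, `IsSSVT.lt_of_row_lt`) shows that the letters `i + 1` read before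
`x` are in both readings those to the north-east of `x`; the letters `i` read before `x` are those
to the north-east in the column reading, while the row reading also counts the letters `i` strictly
north-west of `x`.  So the column inequality at `x` implies the row inequality at `x`
(`rowCond_of_colCond`).

Conversely (`colCond_of_rowCond`), a letter `i` strictly north-west of `x`, say in column `k`, forces
`(r, k)` to contain `i + 1`.  Let `c'` be the leftmost such column (or `c` if there is none).  All
cells `(r, k)` with `c' ≤ k ≤ c` contain `i + 1`, and each column `k` with `c' ≤ k < c` contains at
most one letter `i`.  Passing from `x` to `(r, c')` hence adds at least `c - c'` letters `i + 1` and
at most `c - c'` letters `i`, so the row inequality at `(r, c')` implies the column inequality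
at `x`.
-/

/-!
Common combinatorial definitions: partitions, (skew) set-valued tableaux,
contratableaux, reading words, dominance, Gelfand-Tsetlin patterns, and the
maps Υ and Ω.  Partitions are encoded as functions `ℕ → ℕ` whose parts are
`lam 1, lam 2, …` (with `lam 0 = 0` as a normalization).  Tableaux are encoded
as functions `ℕ → ℕ → Finset ℕ` assigning to each box (row, column), both
indexed from `1`, its (finite) set of entries, with value `∅` outside the
shape. -/

/-- `lam` is a partition with at most `n` nonzero parts `lam 1 ≥ lam 2 ≥ ⋯`. -/
def IsPartition (n : ℕ) (lam : ℕ → ℕ) : Prop :=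
  lam 0 = 0 ∧ (∀ i, 1 ≤ i → lam (i + 1) ≤ lam i) ∧ (∀ i, n < i → lam i = 0)

/-- `|lam|`, the sum of the parts of a partition in `P[n]`. -/
def sumParts (n : ℕ) (lam : ℕ → ℕ) : ℕ := ∑ i ∈ Finset.Icc 1 n, lam i

/-- The boxes of the skew Young diagram `lam/mu` (rows indexed from the top,
starting at `1`; columns from the left, starting at `1`). -/
def SkewBox (lam mu : ℕ → ℕ) (i j : ℕ) : Prop :=
  1 ≤ i ∧ mu i < j ∧ j ≤ lam i

/-- The boxes of the straight Young diagram of `mu`. -/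
def ShapeBox (mu : ℕ → ℕ) (i j : ℕ) : Prop :=
  1 ≤ i ∧ 1 ≤ j ∧ j ≤ mu i

/-- A semi-standard set-valued tableau with entries in `[n] = {1, …, n}` on a
given set `box` of boxes (rows indexed from the top): every box carries a
nonempty subset of `[n]`, rows weakly increase from left to right, columns
strictly increase from top to bottom, and the filling vanishes off the shape. -/
def IsSSVT (n : ℕ) (box : ℕ → ℕ → Prop) (T : ℕ → ℕ → Finset ℕ) : Prop :=
  (∀ i j, box i j → (T i j).Nonempty) ∧
  (∀ i j, box i j → T i j ⊆ Finset.Icc 1 n) ∧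
  (∀ i j, ¬ box i j → T i j = ∅) ∧
  (∀ i j, box i j → box i (j + 1) → ∀ a ∈ T i j, ∀ b ∈ T i (j + 1), a ≤ b) ∧
  (∀ i j, box i j → box (i + 1) j → ∀ a ∈ T i j, ∀ b ∈ T (i + 1) j, a < b)

/-- The boxes of the rotated shape `C(lam)` (for `lam ∈ P[n]`): the `j`-th row
from the *bottom* (`1 ≤ j ≤ n`) consists of `lam j` right-justified boxes, in
columns `lam 1 - lam j + 1, …, lam 1`. -/
def ContraBox (n : ℕ) (lam : ℕ → ℕ) (j c : ℕ) : Prop :=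
  1 ≤ j ∧ j ≤ n ∧ lam 1 - lam j < c ∧ c ≤ lam 1

/-- A set-valued contratableau of shape `lam` with entries in `[n]`: a
semi-standard set-valued tableau of shape `C(lam)`.  Here `T j c` is the box in
the `j`-th row from the bottom and column `c`; "columns strictly increase from
top to bottom" says entries of row `j+1` (which lies above row `j`) are
strictly smaller than those below them in row `j`. -/
def IsSVCT (n : ℕ) (lam : ℕ → ℕ) (T : ℕ → ℕ → Finset ℕ) : Prop :=
  (∀ j c, ContraBox n lam j c → (T j c).Nonempty) ∧
  (∀ j c, ContraBox n lam j c → T j c ⊆ Finset.Icc 1 n) ∧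
  (∀ j c, ¬ ContraBox n lam j c → T j c = ∅) ∧
  (∀ j c, ContraBox n lam j c → ContraBox n lam j (c + 1) →
    ∀ a ∈ T j c, ∀ b ∈ T j (c + 1), a ≤ b) ∧
  (∀ j c, ContraBox n lam j c → ContraBox n lam (j + 1) c →
    ∀ a ∈ T (j + 1) c, ∀ b ∈ T j c, a < b)

/-- The entries of one cell, read in decreasing order. -/
def cellWord (S : Finset ℕ) : List ℕ := (S.sort (· ≤ ·)).reverse

/-- The row word: rows are read from top to bottom, each row from right to
left, the entries of each cell in decreasing order (reading over the rectangle
with `R` rows and `W` columns, which covers the shape; cells off the shape are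
empty and contribute nothing). -/
def rowWordRect (R W : ℕ) (T : ℕ → ℕ → Finset ℕ) : List ℕ :=
  ((List.range R).map (fun i =>
    (((List.range W).reverse).map (fun j => cellWord (T (i + 1) (j + 1)))).flatten)).flatten

/-- The column word: columns are read from rightmost to leftmost, each column
from top to bottom, the entries of each cell in decreasing order. -/
def colWordRect (R W : ℕ) (T : ℕ → ℕ → Finset ℕ) : List ℕ :=
  (((List.range W).reverse).map (fun j =>
    ((List.range R).map (fun i => cellWord (T (i + 1) (j + 1)))).flatten)).flatten

/-- The row word of a contratableau whose rows are indexed from the bottom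
(`1, …, n`): rows are read from top to bottom (i.e. row `n` first), each row
from right to left, cell entries in decreasing order. -/
def contraRowWord (n W : ℕ) (T : ℕ → ℕ → Finset ℕ) : List ℕ :=
  (((List.range n).reverse).map (fun j =>
    (((List.range W).reverse).map (fun c => cellWord (T (j + 1) (c + 1)))).flatten)).flatten

/-- A word is dominant if every prefix contains at least as many `i`'s as
`(i+1)`'s, for every `i ≥ 1`. -/
def Dominant (u : List ℕ) : Prop :=
  ∀ t i, 1 ≤ i → (u.take t).count (i + 1) ≤ (u.take t).count i

/-- The row word of the superstandard tableau `T_lam` of shape and weight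
`lam` (its `i`-th row consists of `lam i` many `i`'s), for `lam ∈ P[n]`. -/
def superWord (n : ℕ) (lam : ℕ → ℕ) : List ℕ :=
  ((List.range n).map (fun i => List.replicate (lam (i + 1)) (i + 1))).flatten

/-- A word `u` is `lam`-dominant if `r(T_lam) * u` is dominant. -/
def LamDominant (n : ℕ) (lam : ℕ → ℕ) (u : List ℕ) : Prop :=
  Dominant (superWord n lam ++ u)

/-- The number of occurrences of the entry `v` in row `r` of `T`
(columns `1, …, W`). -/
def rowOcc (W : ℕ) (T : ℕ → ℕ → Finset ℕ) (r v : ℕ) : ℕ :=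
  ∑ c ∈ Finset.Icc 1 W, if v ∈ T r c then 1 else 0

/-- The number of occurrences of the entry `v` in `T` (the `v`-th coordinate
of the weight `wt T`), rows `1, …, R` and columns `1, …, W`. -/
def wtT (R W : ℕ) (T : ℕ → ℕ → Finset ℕ) (v : ℕ) : ℕ :=
  ∑ r ∈ Finset.Icc 1 R, rowOcc W T r v

/-- The total number of entries `|T|` of a set-valued tableau. -/
def sizeT (R W : ℕ) (T : ℕ → ℕ → Finset ℕ) : ℕ :=
  ∑ r ∈ Finset.Icc 1 R, ∑ c ∈ Finset.Icc 1 W, (T r c).card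

/-- A Gelfand-Tsetlin pattern of size `n`: a triangular array of integers
`x i j` (`1 ≤ j ≤ i ≤ n`) with `NE_{i,j} = x i j - x (i-1) j ≥ 0` and
`SE_{i,j} = x (i-1) j - x i (j+1) ≥ 0` for all `1 ≤ j < i ≤ n`, normalized to
vanish outside the triangle. -/
def IsGT (n : ℕ) (x : ℕ → ℕ → ℤ) : Prop :=
  (∀ i j, 1 ≤ j → j < i → i ≤ n → x (i - 1) j ≤ x i j ∧ x i (j + 1) ≤ x (i - 1) j) ∧
  (∀ i j, ¬ (1 ≤ j ∧ j ≤ i ∧ i ≤ n) → x i j = 0)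

/-- A GT pattern in `GT_ℤ(lam)`: bottom row equal to `lam`. -/
def IsGTZ (n : ℕ) (lam : ℕ → ℕ) (x : ℕ → ℕ → ℤ) : Prop :=
  IsGT n x ∧ ∀ j, 1 ≤ j → j ≤ n → x n j = (lam j : ℤ)

/-- A valid set of marks on a GT pattern: `M ⊆ {(i,j) : 1 ≤ j < i ≤ n` and
`SE_{i,j}(x) > 0}`. -/
def MarksOK (n : ℕ) (x : ℕ → ℕ → ℤ) (M : Finset (ℕ × ℕ)) : Prop :=
  ∀ p ∈ M, 1 ≤ p.2 ∧ p.2 < p.1 ∧ p.1 ≤ n ∧ 0 < x (p.1 - 1) p.2 - x p.1 (p.2 + 1)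

/-- A marked GT pattern in `MGT_ℤ(lam)`. -/
def IsMGTZ (n : ℕ) (lam : ℕ → ℕ) (x : ℕ → ℕ → ℤ) (M : Finset (ℕ × ℕ)) : Prop :=
  IsGTZ n lam x ∧ MarksOK n x M

/-- The map `Υ` from marked GT patterns to set-valued tableaux, in closed form:
the entry `i` lies in the box in row `r`, column `c` iff `x_{i-1,r} < c ≤ x_{i,r}`
(the horizontal strip `x^{(i)}/x^{(i-1)}` is filled with `i`'s), or `(i,r) ∈ M`
and `c = x_{i-1,r}` (for a mark, `i` is added to the rightmost box of row `r`
of `X^{(i-1)}`, the box containing `i-1` there). -/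
def Upsilon (n : ℕ) (x : ℕ → ℕ → ℤ) (M : Finset (ℕ × ℕ)) : ℕ → ℕ → Finset ℕ :=
  fun r c => (Finset.Icc 1 n).filter (fun i =>
    (x (i - 1) r < (c : ℤ) ∧ (c : ℤ) ≤ x i r) ∨ ((i, r) ∈ M ∧ (c : ℤ) = x (i - 1) r))

/-- The map `Ω` from marked GT patterns to set-valued contratableaux of shape
`lam`, in closed form.  Rows are indexed from the bottom and the box in row `j`
and column `c` is the `d`-th box from the right where `d = lam 1 + 1 - c`.
The entry `v = n + 1 - i` lies there iff `y_{i-1,j} < d ≤ y_{i,j}` (the boxes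
of `C(y^{(i)})/C(y^{(i-1)})` are filled with `n+1-i`), or `(i,j) ∈ M` and
`d = y_{i-1,j}` (for a mark, `n+1-i` is added to the leftmost box of row `j`
of `Y^{(i-1)}`, the box containing `n+2-i` there). -/
def Omega (n : ℕ) (lam : ℕ → ℕ) (y : ℕ → ℕ → ℤ) (M : Finset (ℕ × ℕ)) : ℕ → ℕ → Finset ℕ :=
  fun j c => (Finset.Icc 1 n).filter (fun v =>
    (y (n - v) j < (lam 1 : ℤ) + 1 - (c : ℤ) ∧ (lam 1 : ℤ) + 1 - (c : ℤ) ≤ y (n + 1 - v) j) ∨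
      ((n + 1 - v, j) ∈ M ∧ (lam 1 : ℤ) + 1 - (c : ℤ) = y (n - v) j))

/-- `N_{i,k} = lam i + (number of occurrences of i in the top k rows of T)`. -/
def Ndom (W : ℕ) (lam : ℕ → ℕ) (T : ℕ → ℕ → Finset ℕ) (i k : ℕ) : ℕ :=
  lam i + ∑ r ∈ Finset.Icc 1 k, rowOcc W T r i

/-- `N↑_{i,k} = mu i + (number of occurrences of i in rows k, k+1, …, n from
the bottom of a contratableau)`. -/
def Nup (n W : ℕ) (mu : ℕ → ℕ) (T : ℕ → ℕ → Finset ℕ) (i k : ℕ) : ℕ :=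
  mu i + ∑ r ∈ Finset.Icc k n, rowOcc W T r i

/-- The GT pattern `Y_T` with entries `y_{i,j} = N_{n-i+j, n-i}` (normalized to
`0` outside the triangle). -/
def Ypat (n W : ℕ) (lam : ℕ → ℕ) (T : ℕ → ℕ → Finset ℕ) : ℕ → ℕ → ℤ :=
  fun i j => if 1 ≤ j ∧ j ≤ i ∧ i ≤ n then (Ndom W lam T (n - i + j) (n - i) : ℤ) else 0

/-- The transported mark set `M' = {(n+1-j, i-j) : (i,j) ∈ M}`. -/
def MarksOf (n : ℕ) (M : Finset (ℕ × ℕ)) : Finset (ℕ × ℕ) :=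
  M.image (fun p => (n + 1 - p.2, p.1 - p.2))

/-- The stable Grothendieck polynomial `G_lam(x_1, …, x_n)`, a polynomial in
variables `X 1, …, X n`. -/
noncomputable def Groth (n : ℕ) (lam : ℕ → ℕ) : MvPolynomial ℕ ℤ :=
  ∑ᶠ T ∈ {T : ℕ → ℕ → Finset ℕ | IsSSVT n (ShapeBox lam) T},
    (-1 : MvPolynomial ℕ ℤ) ^ (sizeT n (lam 1) T - sumParts n lam) *
      ∏ k ∈ Finset.Icc 1 n, MvPolynomial.X k ^ wtT n (lam 1) T k

/-! ### Dominance of words read cell by cell -/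

theorem dominant_concat_iff (s : List ℕ) (x : ℕ) :
    Dominant (s ++ [x]) ↔
      Dominant s ∧ ∀ i, 1 ≤ i → i + 1 = x → s.count (i + 1) + 1 ≤ s.count i := by
  constructor
  · intro h
    refine ⟨fun t i hi => ?_, fun i hi hx => ?_⟩
    · have := h (min t s.length) i hi
      rw [List.take_append_of_le_length (min_le_right _ _)] at this
      rcases le_total t s.length with ht | ht
      · rwa [min_eq_left ht] at this
      · rw [min_eq_right ht, List.take_length] at this
        rwa [List.take_of_length_le ht]
    · have := h (s.length + 1) i hi
      rw [List.take_of_length_le (by simp)] at this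
      subst hx
      simpa [List.count_append, List.count_singleton] using this
  · rintro ⟨h, hx⟩ t i hi
    rcases le_or_gt t s.length with ht | ht
    · rw [List.take_append_of_le_length ht]
      exact h t i hi
    · rw [List.take_of_length_le (by simp; omega)]
      have h1 := h s.length i hi
      rw [List.take_length] at h1
      have h2 := hx i hi
      simp only [List.count_append, List.count_singleton, beq_iff_eq]
      split_ifs <;> omega

/-- For a strictly decreasing word `w` the letters of `w` read before `i + 1` are all larger, so
only the counts in `s` matter. -/
theorem dominant_append_decreasing_iff (w : List ℕ) (hw : w.Pairwise (· > ·)) (s : List ℕ) :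
    Dominant (s ++ w) ↔
      Dominant s ∧ ∀ i, 1 ≤ i → i + 1 ∈ w → s.count (i + 1) + 1 ≤ s.count i := by
  induction w generalizing s with
  | nil => simp
  | cons x w ih =>
    rw [List.pairwise_cons] at hw
    rw [List.append_cons, ih hw.2, dominant_concat_iff]
    have key : ∀ i, i + 1 ∈ w →
        (s ++ [x]).count (i + 1) = s.count (i + 1) ∧ (s ++ [x]).count i = s.count i := by
      intro i hi
      have := hw.1 _ hi
      simp only [List.count_append, List.count_singleton, beq_iff_eq]
      constructor <;> split_ifs <;> omega
    constructor
    · rintro ⟨⟨h1, h2⟩, h3⟩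
      refine ⟨h1, fun i hi hm => ?_⟩
      rcases List.mem_cons.1 hm with hm | hm
      · exact h2 i hi hm
      · have := h3 i hi hm
        rwa [(key i hm).1, (key i hm).2] at this
    · rintro ⟨h1, h2⟩
      refine ⟨⟨h1, fun i hi hx => h2 i hi (by simp [hx])⟩, fun i hi hm => ?_⟩
      rw [(key i hm).1, (key i hm).2]
      exact h2 i hi (List.mem_cons_of_mem _ hm)

theorem cellWord_pairwise (S : Finset ℕ) : (cellWord S).Pairwise (· > ·) := by
  unfold cellWord
  rw [List.pairwise_reverse]
  exact (Finset.sortedLT_sort S).pairwise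

theorem mem_cellWord (S : Finset ℕ) (v : ℕ) : v ∈ cellWord S ↔ v ∈ S := by
  simp [cellWord]

theorem count_cellWord (S : Finset ℕ) (v : ℕ) :
    (cellWord S).count v = if v ∈ S then 1 else 0 := by
  have hn : (cellWord S).Nodup := (cellWord_pairwise S).imp (fun h => ne_of_gt h)
  split_ifs with h
  · exact List.count_eq_one_of_mem hn ((mem_cellWord S v).2 h)
  · exact List.count_eq_zero_of_not_mem (fun h' => h ((mem_cellWord S v).1 h'))

theorem dominant_cells_iff_split {α : Type*} (S : α → Finset ℕ) (L : List α) (s : List ℕ) :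
    Dominant (s ++ (L.map (fun x => cellWord (S x))).flatten) ↔
      Dominant s ∧ ∀ L₁ x L₂, L = L₁ ++ x :: L₂ → ∀ i, 1 ≤ i → i + 1 ∈ S x →
        s.count (i + 1) + L₁.countP (fun y => i + 1 ∈ S y) + 1 ≤
          s.count i + L₁.countP (fun y => i ∈ S y) := by
  induction L generalizing s with
  | nil => simp
  | cons x L ih =>
    rw [List.map_cons, List.flatten_cons, ← List.append_assoc, ih,
      dominant_append_decreasing_iff _ (cellWord_pairwise _)]
    simp only [mem_cellWord, List.count_append, count_cellWord]
    constructor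
    · rintro ⟨⟨h1, h2⟩, h3⟩
      refine ⟨h1, fun L₁ y L₂ hL i hi hy => ?_⟩
      rcases L₁ with _ | ⟨z, L₁⟩
      · obtain ⟨rfl, rfl⟩ := List.cons.inj hL
        simpa using h2 i hi hy
      · obtain ⟨rfl, hL'⟩ := List.cons.inj hL
        have := h3 L₁ y L₂ hL' i hi hy
        simp only [List.countP_cons, decide_eq_true_eq]
        omega
    · rintro ⟨h1, h2⟩
      refine ⟨⟨h1, fun i hi hx => by simpa using h2 [] x L rfl i hi hx⟩,
        fun L₁ y L₂ hL i hi hy => ?_⟩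
      have := h2 (x :: L₁) y L₂ (by rw [hL]; rfl) i hi hy
      simp only [List.countP_cons, decide_eq_true_eq] at this
      omega

/-- The inequality, for the cell `x` and the letter `i + 1` in it, between the numbers of letters
`i + 1` and `i` in an initial word (with letter counts `cs`) and in the cells of `C` that precede `x`
in the reading order `lt`. -/
def CellCond {α : Type*} (lt : α → α → Prop) [DecidableRel lt] (C : Finset α)
    (S : α → Finset ℕ) (cs : ℕ → ℕ) (x : α) (i : ℕ) : Prop :=
  cs (i + 1) + (C.filter (fun y => lt y x ∧ i + 1 ∈ S y)).card + 1 ≤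
    cs i + (C.filter (fun y => lt y x ∧ i ∈ S y)).card

theorem countP_initial_eq_card {α : Type*} [DecidableEq α] (lt : α → α → Prop) [DecidableRel lt]
    (hasymm : ∀ x y, lt x y → ¬ lt y x) (L₁ L₂ : List α) (x : α)
    (hL : (L₁ ++ x :: L₂).Pairwise lt) (p : α → Prop) [DecidablePred p] :
    L₁.countP (fun y => p y) =
      ((L₁ ++ x :: L₂).toFinset.filter (fun y => lt y x ∧ p y)).card := by
  have hirr : ∀ x, ¬ lt x x := fun x h => hasymm x x h h
  rw [List.pairwise_append, List.pairwise_cons] at hL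
  obtain ⟨hL1, ⟨hx, -⟩, hL12⟩ := hL
  have hn : (L₁.filter (fun y => p y)).Nodup := by
    refine List.Nodup.filter _ (hL1.imp ?_)
    rintro a b hab rfl
    exact hirr _ hab
  rw [List.countP_eq_length_filter, ← List.toFinset_card_of_nodup hn]
  congr 1
  ext y
  simp only [List.mem_toFinset, List.mem_filter, decide_eq_true_eq, Finset.mem_filter,
    List.mem_append, List.mem_cons]
  constructor
  · rintro ⟨h1, h2⟩
    exact ⟨Or.inl h1, hL12 y h1 x (by simp), h2⟩
  · rintro ⟨h | rfl | h, h1, h2⟩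
    · exact ⟨h, h2⟩
    · exact absurd h1 (hirr _)
    · exact absurd h1 (hasymm _ _ (hx y h))

theorem dominant_cells_iff {α : Type*} [DecidableEq α] (lt : α → α → Prop) [DecidableRel lt]
    (hasymm : ∀ x y, lt x y → ¬ lt y x) (S : α → Finset ℕ) (L : List α) (hL : L.Pairwise lt)
    (C : Finset α) (hC : L.toFinset = C) (s : List ℕ) :
    Dominant (s ++ (L.map (fun x => cellWord (S x))).flatten) ↔
      Dominant s ∧ ∀ x ∈ C, ∀ i, 1 ≤ i → i + 1 ∈ S x →
        CellCond lt C S (fun v => s.count v) x i := by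
  subst hC
  rw [dominant_cells_iff_split]
  refine and_congr_right fun _ => ?_
  constructor
  · intro h x hx i hi hm
    obtain ⟨L₁, L₂, rfl⟩ := List.append_of_mem (List.mem_toFinset.1 hx)
    have := h L₁ x L₂ rfl i hi hm
    rwa [countP_initial_eq_card lt hasymm L₁ L₂ x hL, countP_initial_eq_card lt hasymm L₁ L₂ x hL]
      at this
  · rintro h L₁ x L₂ rfl i hi hm
    have := h x (by simp) i hi hm
    rwa [countP_initial_eq_card lt hasymm L₁ L₂ x hL, countP_initial_eq_card lt hasymm L₁ L₂ x hL]

/-! ### Row and column readings as lists of cells -/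

/-- The row reading order: `y` is read before `x`. -/
def RowLt (y x : ℕ × ℕ) : Prop := y.1 < x.1 ∨ y.1 = x.1 ∧ x.2 < y.2

/-- The column reading order: `y` is read before `x`. -/
def ColLt (y x : ℕ × ℕ) : Prop := x.2 < y.2 ∨ y.2 = x.2 ∧ y.1 < x.1

instance : DecidableRel RowLt := fun _ _ => inferInstanceAs (Decidable (_ ∨ _))

instance : DecidableRel ColLt := fun _ _ => inferInstanceAs (Decidable (_ ∨ _))

/-- The cells of the rectangle in row reading order, with both coordinates counted from `0`. -/
def rowCells (R W : ℕ) : List (ℕ × ℕ) :=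
  (List.range R).flatMap (fun i => (List.range W).reverse.map (fun j => (i, j)))

/-- The cells of the rectangle in column reading order, with both coordinates counted from `0`. -/
def colCells (R W : ℕ) : List (ℕ × ℕ) :=
  (List.range W).reverse.flatMap (fun j => (List.range R).map (fun i => (i, j)))

theorem rowWordRect_eq (R W : ℕ) (T : ℕ → ℕ → Finset ℕ) :
    rowWordRect R W T =
      ((rowCells R W).map (fun x => cellWord (T (x.1 + 1) (x.2 + 1)))).flatten := by
  simp only [rowWordRect, rowCells, List.flatMap, List.map_flatten, List.map_map,
    List.flatten_flatten, Function.comp_def]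

theorem colWordRect_eq (R W : ℕ) (T : ℕ → ℕ → Finset ℕ) :
    colWordRect R W T =
      ((colCells R W).map (fun x => cellWord (T (x.1 + 1) (x.2 + 1)))).flatten := by
  simp only [colWordRect, colCells, List.flatMap, List.map_flatten, List.map_map,
    List.flatten_flatten, Function.comp_def]

theorem rowCells_pairwise (R W : ℕ) : (rowCells R W).Pairwise RowLt := by
  rw [rowCells, List.pairwise_flatMap]
  refine ⟨fun i _ => ?_, ?_⟩
  · rw [List.pairwise_map, List.pairwise_reverse]
    exact List.pairwise_lt_range.imp (fun h => Or.inr ⟨rfl, h⟩)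
  · refine List.pairwise_lt_range.imp fun {a b} h x hx y hy => ?_
    simp only [List.mem_map] at hx hy
    obtain ⟨_, _, rfl⟩ := hx
    obtain ⟨_, _, rfl⟩ := hy
    exact Or.inl h

theorem colCells_pairwise (R W : ℕ) : (colCells R W).Pairwise ColLt := by
  rw [colCells, List.pairwise_flatMap]
  refine ⟨fun i _ => ?_, ?_⟩
  · rw [List.pairwise_map]
    exact List.pairwise_lt_range.imp (fun h => Or.inr ⟨rfl, h⟩)
  · rw [List.pairwise_reverse]
    refine List.pairwise_lt_range.imp fun {a b} h x hx y hy => ?_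
    simp only [List.mem_map] at hx hy
    obtain ⟨_, _, rfl⟩ := hx
    obtain ⟨_, _, rfl⟩ := hy
    exact Or.inl h

theorem rowCells_toFinset (R W : ℕ) :
    (rowCells R W).toFinset = Finset.range R ×ˢ Finset.range W := by
  ext ⟨a, b⟩
  simp [rowCells]

theorem colCells_toFinset (R W : ℕ) :
    (colCells R W).toFinset = Finset.range R ×ˢ Finset.range W := by
  ext ⟨a, b⟩
  simp [colCells, and_comm]

/-! ### Order relations between entries of a skew set-valued tableau -/

section Tableau

variable {n R : ℕ} {alpha beta : ℕ → ℕ} {T : ℕ → ℕ → Finset ℕ}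

theorem IsPartition.antitone {lam : ℕ → ℕ} (h : IsPartition R lam) {i j : ℕ} (hi : 1 ≤ i)
    (hij : i ≤ j) : lam j ≤ lam i := by
  induction j, hij using Nat.le_induction with
  | base => exact le_rfl
  | succ k hk ih => exact (h.2.1 k (hi.trans hk)).trans ih

theorem IsSSVT.box_of_mem {box : ℕ → ℕ → Prop} (hT : IsSSVT n box T) {i j a : ℕ}
    (h : a ∈ T i j) : box i j := by
  by_contra hb
  rw [hT.2.2.1 i j hb] at h
  simp at h

/-- A skew shape contains with two cells, one weakly south-east of the other, all cells in
between. -/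
theorem SkewBox.convex (halpha : IsPartition R alpha) (hbeta : IsPartition R beta)
    {i j i' j' k l : ℕ} (h : SkewBox alpha beta i j) (h' : SkewBox alpha beta i' j')
    (hik : i ≤ k) (hki : k ≤ i') (hjl : j ≤ l) (hlj : l ≤ j') : SkewBox alpha beta k l := by
  have h1 := hbeta.antitone h.1 hik
  have h2 := halpha.antitone (h.1.trans hik) hki
  have h3 := h.2.1
  have h4 := h'.2.2
  have h5 := h.1
  exact ⟨by omega, by omega, by omega⟩

theorem IsSSVT.row_le (halpha : IsPartition R alpha) (hbeta : IsPartition R beta)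
    (hT : IsSSVT n (SkewBox alpha beta) T) {i j j' a b : ℕ} (hj : j < j')
    (ha : a ∈ T i j) (hb : b ∈ T i j') : a ≤ b := by
  induction j', hj using Nat.le_induction generalizing b with
  | base => exact hT.2.2.2.1 i j (hT.box_of_mem ha) (hT.box_of_mem hb) a ha b hb
  | succ k hk ih =>
    have hbox : SkewBox alpha beta i k :=
      (hT.box_of_mem ha).convex halpha hbeta (hT.box_of_mem hb) le_rfl le_rfl (by omega) (by omega)
    obtain ⟨e, he⟩ := hT.1 i k hbox
    exact (ih he).trans (hT.2.2.2.1 i k hbox (hT.box_of_mem hb) e he b hb)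

theorem IsSSVT.col_lt (halpha : IsPartition R alpha) (hbeta : IsPartition R beta)
    (hT : IsSSVT n (SkewBox alpha beta) T) {i i' j a b : ℕ} (hi : i < i')
    (ha : a ∈ T i j) (hb : b ∈ T i' j) : a < b := by
  induction i', hi using Nat.le_induction generalizing b with
  | base => exact hT.2.2.2.2 i j (hT.box_of_mem ha) (hT.box_of_mem hb) a ha b hb
  | succ k hk ih =>
    have hbox : SkewBox alpha beta k j :=
      (hT.box_of_mem ha).convex halpha hbeta (hT.box_of_mem hb) (by omega) (by omega) le_rfl le_rfl
    obtain ⟨e, he⟩ := hT.1 k j hbox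
    exact (ih he).trans (hT.2.2.2.2 k j hbox (hT.box_of_mem hb) e he b hb)

theorem IsSSVT.lt_of_row_lt (halpha : IsPartition R alpha) (hbeta : IsPartition R beta)
    (hT : IsSSVT n (SkewBox alpha beta) T) {i i' j j' a b : ℕ} (hi : i < i') (hj : j ≤ j')
    (ha : a ∈ T i j) (hb : b ∈ T i' j') : a < b := by
  rcases hj.eq_or_lt with rfl | hj
  · exact hT.col_lt halpha hbeta hi ha hb
  · obtain ⟨e, he⟩ := hT.1 i j' <| (hT.box_of_mem ha).convex halpha hbeta (hT.box_of_mem hb)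
      le_rfl hi.le hj.le le_rfl
    exact (hT.row_le halpha hbeta hj ha he).trans_lt (hT.col_lt halpha hbeta hi he hb)

/-! ### Comparison of the two families of inequalities -/

theorem rowCond_of_colCond (halpha : IsPartition R alpha) (hbeta : IsPartition R beta)
    (hT : IsSSVT n (SkewBox alpha beta) T) (C : Finset (ℕ × ℕ)) (cs : ℕ → ℕ) (x : ℕ × ℕ) (i : ℕ)
    (hx : i + 1 ∈ T (x.1 + 1) (x.2 + 1))
    (h : CellCond ColLt C (fun y => T (y.1 + 1) (y.2 + 1)) cs x i) :
    CellCond RowLt C (fun y => T (y.1 + 1) (y.2 + 1)) cs x i := by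
  unfold CellCond at *
  simp only at h ⊢
  have h1 : (C.filter (fun y => RowLt y x ∧ i + 1 ∈ T (y.1 + 1) (y.2 + 1))).card ≤
      (C.filter (fun y => ColLt y x ∧ i + 1 ∈ T (y.1 + 1) (y.2 + 1))).card := by
    refine Finset.card_le_card fun y hy => ?_
    simp only [Finset.mem_filter] at hy ⊢
    obtain ⟨hC, hlt, hm⟩ := hy
    refine ⟨hC, ?_, hm⟩
    rcases hlt with hlt | ⟨-, hlt⟩
    · rcases lt_or_ge x.2 y.2 with h2 | h2
      · exact Or.inl h2
      · have := hT.lt_of_row_lt halpha hbeta (by omega) (by omega) hm hx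
        omega
    · exact Or.inl hlt
  have h2 : (C.filter (fun y => ColLt y x ∧ i ∈ T (y.1 + 1) (y.2 + 1))).card ≤
      (C.filter (fun y => RowLt y x ∧ i ∈ T (y.1 + 1) (y.2 + 1))).card := by
    refine Finset.card_le_card fun y hy => ?_
    simp only [Finset.mem_filter] at hy ⊢
    obtain ⟨hC, hlt, hm⟩ := hy
    refine ⟨hC, Or.inl ?_, hm⟩
    rcases hlt with hlt | ⟨-, hlt⟩
    · by_contra hcon
      rcases (not_lt.1 hcon).eq_or_lt with heq | hgt
      · rw [heq] at hx
        have := hT.row_le halpha hbeta (by omega) hx hm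
        omega
      · have := hT.lt_of_row_lt halpha hbeta (by omega) (by omega) hx hm
        omega
    · exact hlt
  omega

theorem colCond_of_rowCond (halpha : IsPartition R alpha) (hbeta : IsPartition R beta)
    (hT : IsSSVT n (SkewBox alpha beta) T) (W : ℕ) (cs : ℕ → ℕ) (i : ℕ)
    (h : ∀ x ∈ Finset.range R ×ˢ Finset.range W, i + 1 ∈ T (x.1 + 1) (x.2 + 1) →
      CellCond RowLt (Finset.range R ×ˢ Finset.range W) (fun y => T (y.1 + 1) (y.2 + 1)) cs x i)
    (x : ℕ × ℕ) (hxC : x ∈ Finset.range R ×ˢ Finset.range W)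
    (hx : i + 1 ∈ T (x.1 + 1) (x.2 + 1)) :
    CellCond ColLt (Finset.range R ×ˢ Finset.range W) (fun y => T (y.1 + 1) (y.2 + 1)) cs x i := by
  classical
  obtain ⟨r, c⟩ := x
  simp only [Finset.mem_product, Finset.mem_range] at hxC hx
  -- The new column is the leftmost one, up to `c`, with `i + 1` in row `r` and, unless it
  -- is `c` itself, with a letter `i` above row `r`.
  obtain ⟨c', ⟨hc', hb', -⟩, hmin⟩ : ∃ c', (c' ≤ c ∧ i + 1 ∈ T (r + 1) (c' + 1) ∧
      (c' = c ∨ ∃ r' < r, i ∈ T (r' + 1) (c' + 1))) ∧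
      ∀ k, (k ≤ c ∧ i + 1 ∈ T (r + 1) (k + 1) ∧
        (k = c ∨ ∃ r' < r, i ∈ T (r' + 1) (k + 1))) → c' ≤ k := by
    have hex : ∃ k, k ≤ c ∧ i + 1 ∈ T (r + 1) (k + 1) ∧
        (k = c ∨ ∃ r' < r, i ∈ T (r' + 1) (k + 1)) := ⟨c, le_rfl, hx, Or.inl rfl⟩
    exact ⟨Nat.find hex, Nat.find_spec hex, fun k hk => Nat.find_min' hex hk⟩
  have hrow := h (r, c') (by simp; omega) hb'
  unfold CellCond at *
  simp only at hrow ⊢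
  set C := Finset.range R ×ˢ Finset.range W with hCdef
  -- The entries of these cells are squeezed between the letters `i + 1` at the two ends.
  have hbetween : ∀ k, c' < k → k ≤ c → i + 1 ∈ T (r + 1) (k + 1) := by
    intro k hk hkc
    rcases hkc.eq_or_lt with rfl | hkc
    · exact hx
    obtain ⟨e, he⟩ := hT.1 (r + 1) (k + 1) <| (hT.box_of_mem hb').convex halpha hbeta
      (hT.box_of_mem hx) le_rfl le_rfl (by omega) (by omega)
    have h1 := hT.row_le halpha hbeta (by omega) hb' he
    have h2 := hT.row_le halpha hbeta (by omega) he hx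
    rwa [le_antisymm h1 h2]
  have hbcount : (C.filter (fun y => ColLt y (r, c) ∧ i + 1 ∈ T (y.1 + 1) (y.2 + 1))).card
      + (c - c') ≤
      (C.filter (fun y => RowLt y (r, c') ∧ i + 1 ∈ T (y.1 + 1) (y.2 + 1))).card := by
    have hcard : ((Finset.Ioc c' c).image (fun k => (r, k))).card = c - c' := by
      rw [Finset.card_image_of_injective _ (fun a b hab => (Prod.mk.inj hab).2), Nat.card_Ioc]
    rw [← hcard, ← Finset.card_union_of_disjoint]
    · refine Finset.card_le_card fun y hy => ?_
      simp only [Finset.mem_union, Finset.mem_filter, Finset.mem_image, Finset.mem_Ioc] at hy ⊢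
      rcases hy with ⟨hC, hlt, hm⟩ | ⟨k, ⟨hk1, hk2⟩, rfl⟩
      · refine ⟨hC, ?_, hm⟩
        rcases hlt with hlt | ⟨-, hlt⟩
        · rcases lt_trichotomy y.1 r with h1 | h1 | h1
          · exact Or.inl h1
          · exact Or.inr ⟨h1, lt_of_le_of_lt hc' hlt⟩
          · have := hT.lt_of_row_lt halpha hbeta (Nat.succ_lt_succ h1)
              (Nat.succ_le_succ (le_of_lt hlt)) hx hm
            omega
        · exact Or.inl hlt
      · refine ⟨?_, Or.inr ⟨rfl, hk1⟩, hbetween k hk1 hk2⟩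
        simp only [hCdef, Finset.mem_product, Finset.mem_range]
        omega
    · rw [Finset.disjoint_left]
      intro y hy hy'
      simp only [Finset.mem_filter, Finset.mem_image, Finset.mem_Ioc] at hy hy'
      obtain ⟨k, hk, rfl⟩ := hy'
      rcases hy.2.1 with hlt | ⟨-, hlt⟩ <;> simp only at hlt <;> omega
  have hacount : (C.filter (fun y => RowLt y (r, c') ∧ i ∈ T (y.1 + 1) (y.2 + 1))).card ≤
      (C.filter (fun y => ColLt y (r, c) ∧ i ∈ T (y.1 + 1) (y.2 + 1))).card + (c - c') := by
    have hcard : (C.filter (fun y => y.1 < r ∧ c' ≤ y.2 ∧ y.2 < c ∧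
        i ∈ T (y.1 + 1) (y.2 + 1))).card ≤ c - c' := by
      rw [← Nat.card_Ico]
      refine Finset.card_le_card_of_injOn Prod.snd (fun y hy => ?_) ?_
      · simp only [Finset.coe_filter, Set.mem_ofPred_eq] at hy
        simp only [Finset.coe_Ico, Set.mem_Ico]
        exact ⟨hy.2.2.1, hy.2.2.2.1⟩
      · rintro ⟨a, k⟩ hy ⟨b, l⟩ hy' hkl
        simp only [Finset.coe_filter, Set.mem_ofPred_eq] at hy hy' hkl
        subst hkl
        rcases lt_trichotomy a b with hab | rfl | hab
        · exact absurd (hT.col_lt halpha hbeta (Nat.succ_lt_succ hab) hy.2.2.2.2 hy'.2.2.2.2)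
            (lt_irrefl _)
        · rfl
        · exact absurd (hT.col_lt halpha hbeta (Nat.succ_lt_succ hab) hy'.2.2.2.2 hy.2.2.2.2)
            (lt_irrefl _)
    refine le_trans (le_trans (Finset.card_le_card fun y hy => ?_) (Finset.card_union_le _ _))
      (Nat.add_le_add_left hcard _)
    simp only [Finset.mem_union, Finset.mem_filter] at hy ⊢
    obtain ⟨hC, hlt, hm⟩ := hy
    rcases hlt with hlt | ⟨heq, hlt⟩
    · simp only at hlt
      rcases lt_trichotomy y.2 c with h1 | h1 | h1
      · refine Or.inr ⟨hC, hlt, ?_, h1, hm⟩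
        -- The cell of row `r` below this `i` has entries `> i` and `≤ i + 1`.
        obtain ⟨e, he⟩ := hT.1 (r + 1) (y.2 + 1) <| (hT.box_of_mem hm).convex halpha hbeta
          (hT.box_of_mem hx) (by omega) le_rfl le_rfl (by omega)
        have h2 := hT.col_lt halpha hbeta (by omega) hm he
        have h3 := hT.row_le halpha hbeta (by omega) he hx
        obtain rfl : e = i + 1 := by omega
        exact hmin _ ⟨h1.le, he, Or.inr ⟨y.1, hlt, hm⟩⟩
      · exact Or.inl ⟨hC, Or.inr ⟨h1, hlt⟩, hm⟩
      · exact Or.inl ⟨hC, Or.inl h1, hm⟩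
    · simp only at heq hlt
      rw [heq] at hm
      have := hT.row_le halpha hbeta (Nat.succ_lt_succ hlt) hb' hm
      omega
  omega

end Tableau

/-- Let `T` be a semi-standard set-valued tableau of any skew
shape `alpha/beta` with entries `≤ n` and let `lam` be a partition.  Then the
row word `r(T)` is `lam`-dominant iff the column word `c(T)` is `lam`-dominant.
(The rectangle `R × W` covers the skew shape, so the reading words read exactly
the boxes of `T`.) -/
theorem rowWord_lamDominant_iff_colWord_lamDominant
    (n R W m : ℕ) (alpha beta lam : ℕ → ℕ)
    (halpha : IsPartition R alpha) (hbeta : IsPartition R beta)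
    (hsub : ∀ i, beta i ≤ alpha i) (hW : alpha 1 ≤ W)
    (hlam : IsPartition m lam)
    (T : ℕ → ℕ → Finset ℕ) (hT : IsSSVT n (SkewBox alpha beta) T) :
    LamDominant m lam (rowWordRect R W T) ↔ LamDominant m lam (colWordRect R W T) := by
  have hrow : ∀ x y, RowLt x y → ¬ RowLt y x := by
    intro x y h h'
    unfold RowLt at h h'
    omega
  have hcol : ∀ x y, ColLt x y → ¬ ColLt y x := by
    intro x y h h'
    unfold ColLt at h h'
    omega
  unfold LamDominant
  rw [rowWordRect_eq, colWordRect_eq,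
    dominant_cells_iff RowLt hrow (fun x => T (x.1 + 1) (x.2 + 1)) _ (rowCells_pairwise R W) _
      (rowCells_toFinset R W),
    dominant_cells_iff ColLt hcol (fun x => T (x.1 + 1) (x.2 + 1)) _ (colCells_pairwise R W) _
      (colCells_toFinset R W)]
  refine and_congr_right fun _ => ⟨fun h x hxC i hi hx => ?_, fun h x hxC i hi hx => ?_⟩
  · exact colCond_of_rowCond halpha hbeta hT W _ i (fun y hy hm => h y hy i hi hm) x hxC hx
  · exact rowCond_of_colCond halpha hbeta hT _ _ x i hx (h x hxC i hi hx)
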